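/- arXiv:1503.07850 — 6 statements merged into one kernel-verified Lean document; each statement's English description precedes it below -/
import Mathlib

section
/- The function v : ℝ × ℝ → ℝ defined by v(x,t) = 1/2 + (1/2)·tanh((1/(2·√2))·(x − t/√2)) satisfies, for all real x and t, the Burgers–Huxley equation ∂v/∂t(x,t) = ∂²v/∂x²(x,t) + v(x,t)·(1 − v(x,t))·(v(x,t) − 1), and moreover v(x,0) = exp((√2/4)·x) / (exp((√2/4)·x) + exp(−(√2/4)·x)) for all real x. -/
/-!
Since `tanh' = 1 - tanh²`, the profile `v = (1 + tanh ξ) / 2` satisfies the logistic equation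
`dv/dξ = 2 v (1 - v)`. With `ξ = (x - t/√2) / (2√2)` this gives `v_x = (√2/2) v (1 - v)` and
`v_t = -(1/2) v (1 - v)`. Differentiating the former once more, `v_xx = (1/2) v (1 - v) (1 - 2v)`,
so `v_xx + v (1 - v) (v - 1) = v (1 - v) (1/2 - v + v - 1) = v_t`.
-/

noncomputable def v : ℝ × ℝ → ℝ := fun p =>
  1/2 + (1/2) * Real.tanh ((1/(2 * Real.sqrt 2)) * (p.1 - p.2 / Real.sqrt 2))

lemma hasDerivAt_tanh (x : ℝ) : HasDerivAt Real.tanh (1 - Real.tanh x ^ 2) x := by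
  have hc : Real.cosh x ≠ 0 := (Real.cosh_pos x).ne'
  have h := (Real.hasDerivAt_sinh x).div (Real.hasDerivAt_cosh x) hc
  have e : Real.tanh = Real.sinh / Real.cosh := by
    funext y
    simp [Real.tanh_eq_sinh_div_cosh]
  rw [e]
  refine h.congr_deriv ?_
  rw [Pi.div_apply]
  field_simp

lemma hasDerivAt_v_space (x t : ℝ) :
    HasDerivAt (fun y => v (y, t)) (Real.sqrt 2 / 2 * (v (x, t) * (1 - v (x, t)))) x := by
  have h := ((hasDerivAt_tanh _).comp x
    (((hasDerivAt_id x).sub_const (t / Real.sqrt 2)).const_mul (1 / (2 * Real.sqrt 2)))).const_mul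
      (1 / 2 : ℝ) |>.const_add (1 / 2 : ℝ)
  refine h.congr_deriv ?_
  have h2 : Real.sqrt 2 ^ 2 = 2 := Real.sq_sqrt (by norm_num)
  have e : 1 / (2 * Real.sqrt 2) = Real.sqrt 2 / 4 := by
    field_simp
    linarith
  simp only [v, id, e]
  ring

lemma hasDerivAt_v_time (x t : ℝ) :
    HasDerivAt (fun s => v (x, s)) (-(1 / 2) * (v (x, t) * (1 - v (x, t)))) t := by
  have h := ((hasDerivAt_tanh _).comp t
    ((((hasDerivAt_id t).div_const (Real.sqrt 2)).const_sub x).const_mul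
      (1 / (2 * Real.sqrt 2)))).const_mul (1 / 2 : ℝ) |>.const_add (1 / 2 : ℝ)
  refine h.congr_deriv ?_
  have h2 : Real.sqrt 2 ^ 2 = 2 := Real.sq_sqrt (by norm_num)
  have e : 1 / (2 * Real.sqrt 2) * -(1 / Real.sqrt 2) = -(1 / 4) := by
    field_simp
    linarith
  simp only [v, id, e]
  ring

theorem burgers_huxley_caseI :
    (∀ x t : ℝ,
      deriv (fun s => v (x, s)) t =
        deriv (deriv (fun y => v (y, t))) x +
          v (x, t) * (1 - v (x, t)) * (v (x, t) - 1)) ∧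
    (∀ x : ℝ, v (x, 0) =
      Real.exp ((Real.sqrt 2 / 4) * x) /
        (Real.exp ((Real.sqrt 2 / 4) * x) + Real.exp (-(Real.sqrt 2 / 4) * x))) := by
  refine ⟨fun x t => ?_, fun x => ?_⟩
  · have hx : deriv (fun y => v (y, t)) =
        fun y => Real.sqrt 2 / 2 * (v (y, t) * (1 - v (y, t))) :=
      funext fun y => (hasDerivAt_v_space y t).deriv
    have hxx := ((hasDerivAt_v_space x t).mul
      ((hasDerivAt_v_space x t).const_sub 1)).const_mul (Real.sqrt 2 / 2)
    have h2 : Real.sqrt 2 ^ 2 = 2 := Real.sq_sqrt (by norm_num)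
    rw [hx, (hasDerivAt_v_time x t).deriv]
    erw [hxx.deriv]
    linear_combination (-(1 / 4) * v (x, t) * (1 - v (x, t)) * (1 - 2 * v (x, t))) * h2
  · have h2 : Real.sqrt 2 ^ 2 = 2 := Real.sq_sqrt (by norm_num)
    have e : 1 / (2 * Real.sqrt 2) = Real.sqrt 2 / 4 := by
      field_simp
      linarith
    simp only [v, e, zero_div, sub_zero, Real.tanh_eq, neg_mul]
    have hp := Real.exp_pos (Real.sqrt 2 / 4 * x)
    have hq := Real.exp_pos (-(Real.sqrt 2 / 4 * x))
    field_simp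
    ring
end

section
/- Let v₀ : ℝ → ℝ be v₀(x) = exp((√2/4)·x)/(exp((√2/4)·x) + exp(−(√2/4)·x)). Then the function v₁(x,t) = −(1/2)·t/(exp((√2/4)·x) + exp(−(√2/4)·x))² satisfies v₁(x,0) = 0 for all x, and for all real x, t: ∂v₁/∂t(x,t) = v₀''(x) + v₀(x)·(1 − v₀(x))·(v₀(x) − 1). -/
/-!
The initial guess `v₀` is a logistic profile: with `k = √2 / 2` it satisfies `v₀' = k v₀ (1 - v₀)`
(`hasDerivAt_v₀`), so `v₀'' = k² v₀ (1 - v₀) (1 - 2 v₀)` with `k² = 1 / 2`. Adding the reaction term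
`-v₀ (1 - v₀)²` leaves `-(1 / 2) v₀ (1 - v₀)`, and `v₀ (1 - v₀)` is the reciprocal of the squared
denominator of `v₀` (`v₀_mul_one_sub`), which gives the time derivative of `v₁`.
-/

noncomputable def v₀ : ℝ → ℝ := fun x =>
  Real.exp ((Real.sqrt 2 / 4) * x) /
    (Real.exp ((Real.sqrt 2 / 4) * x) + Real.exp (-(Real.sqrt 2 / 4) * x))

noncomputable def v₁ : ℝ → ℝ → ℝ := fun x t =>
  -(1/2) * t / (Real.exp ((Real.sqrt 2 / 4) * x) + Real.exp (-(Real.sqrt 2 / 4) * x))^2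

/-- The two exponentials are mutually inverse, so the numerator of `v₀ (1 - v₀)` is `1`. -/
lemma v₀_mul_one_sub (x : ℝ) :
    v₀ x * (1 - v₀ x) =
      1 / (Real.exp ((Real.sqrt 2 / 4) * x) + Real.exp (-(Real.sqrt 2 / 4) * x)) ^ 2 := by
  have hinv : Real.exp ((Real.sqrt 2 / 4) * x) * Real.exp (-(Real.sqrt 2 / 4) * x) = 1 := by
    rw [← Real.exp_add, neg_mul, add_neg_cancel, Real.exp_zero]
  have hpos : Real.exp ((Real.sqrt 2 / 4) * x) + Real.exp (-(Real.sqrt 2 / 4) * x) ≠ 0 := by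
    positivity
  unfold v₀
  generalize Real.exp ((Real.sqrt 2 / 4) * x) = a at *
  generalize Real.exp (-(Real.sqrt 2 / 4) * x) = b at *
  field_simp
  linear_combination hinv

lemma hasDerivAt_v₀ (x : ℝ) :
    HasDerivAt v₀ (Real.sqrt 2 / 2 * (v₀ x * (1 - v₀ x))) x := by
  have hpos : Real.exp ((Real.sqrt 2 / 4) * x) + Real.exp (-(Real.sqrt 2 / 4) * x) ≠ 0 := by
    positivity
  have hexp (c : ℝ) : HasDerivAt (fun y : ℝ => Real.exp (c * y)) (Real.exp (c * x) * c) x := by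
    simpa using ((hasDerivAt_id x).const_mul c).exp
  have h := (hexp (Real.sqrt 2 / 4)).div
    ((hexp (Real.sqrt 2 / 4)).add (hexp (-(Real.sqrt 2 / 4)))) hpos
  refine h.congr_deriv ?_
  simp only [v₀, Pi.add_apply]
  field_simp
  ring

theorem hpm_caseI_order1 :
    (∀ x : ℝ, v₁ x 0 = 0) ∧
    (∀ x t : ℝ,
      deriv (fun s => v₁ x s) t =
        deriv (deriv v₀) x + v₀ x * (1 - v₀ x) * (v₀ x - 1)) := by
  refine ⟨fun x => by simp [v₁], fun x t => ?_⟩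
  have hderiv : deriv v₀ = fun y => Real.sqrt 2 / 2 * (v₀ y * (1 - v₀ y)) :=
    funext fun y => (hasDerivAt_v₀ y).deriv
  have hv := hasDerivAt_v₀ x
  have hsecond := ((hv.mul (hv.const_sub 1)).const_mul (Real.sqrt 2 / 2)).deriv
  have htime : HasDerivAt (fun s => v₁ x s) (-(1 / 2) * (v₀ x * (1 - v₀ x))) t := by
    rw [v₀_mul_one_sub]
    unfold v₁
    refine ((((hasDerivAt_id t).const_mul (-(1 / 2) : ℝ)).div_const _).congr_deriv ?_)
    ring
  have hsq : Real.sqrt 2 ^ 2 = 2 := Real.sq_sqrt (by norm_num)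
  rw [htime.deriv, hderiv]
  refine Eq.trans ?_ (congrArg (· + v₀ x * (1 - v₀ x) * (v₀ x - 1)) hsecond.symm)
  linear_combination (-(1 / 4) * (v₀ x * (1 - v₀ x) * (1 - 2 * v₀ x))) * hsq
end

section
/- Let v₀(x) = exp((√2/4)·x)/(exp((√2/4)·x) + exp(−(√2/4)·x)) and v₁(x,t) = −(1/2)·t/(exp((√2/4)·x) + exp(−(√2/4)·x))². Then the function v₂(x,t) = −(1/8)·(exp((√2/4)·x) − exp(−(√2/4)·x))·t²/(exp((√2/4)·x) + exp(−(√2/4)·x))³ satisfies v₂(x,0) = 0 for all x, and for all real x, t: ∂v₂/∂t(x,t) = ∂²v₁/∂x²(x,t) + 4·v₀(x)·v₁(x,t) − v₁(x,t) − 3·v₁(x,t)·v₀(x)². -/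
noncomputable def v₂ : ℝ → ℝ → ℝ := fun x t =>
  -(1/8) * (Real.exp ((Real.sqrt 2 / 4) * x) - Real.exp (-(Real.sqrt 2 / 4) * x)) * t^2 /
    (Real.exp ((Real.sqrt 2 / 4) * x) + Real.exp (-(Real.sqrt 2 / 4) * x))^3

theorem hasDerivAt_exp_lin (c x : ℝ) :
    HasDerivAt (fun y => Real.exp (c * y)) (c * Real.exp (c * x)) x := by
  have h := ((hasDerivAt_id x).const_mul c).exp
  refine h.congr_deriv ?_
  simp only [id, mul_one, mul_comm]

theorem hasDerivAt_v₁ (x t : ℝ) :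
    HasDerivAt (fun y => v₁ y t)
      (Real.sqrt 2 / 4 * t *
        (Real.exp ((Real.sqrt 2 / 4) * x) - Real.exp (-(Real.sqrt 2 / 4) * x)) /
        (Real.exp ((Real.sqrt 2 / 4) * x) + Real.exp (-(Real.sqrt 2 / 4) * x))^3) x := by
  unfold v₁
  generalize Real.sqrt 2 / 4 = k
  have hS : Real.exp (k * x) + Real.exp (-k * x) ≠ 0 := by positivity
  have h := (hasDerivAt_const x (-(1/2) * t)).fun_div
    (((hasDerivAt_exp_lin k x).fun_add (hasDerivAt_exp_lin (-k) x)).fun_pow 2) (pow_ne_zero 2 hS)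
  refine h.congr_deriv ?_
  generalize Real.exp (k * x) = E at *
  generalize Real.exp (-k * x) = F at *
  field_simp
  ring

theorem hasDerivAt_deriv_v₁ (x t : ℝ) :
    HasDerivAt (deriv (fun y => v₁ y t))
      (t / (8 * (Real.exp ((Real.sqrt 2 / 4) * x) + Real.exp (-(Real.sqrt 2 / 4) * x))^2) -
        3 * t * (Real.exp ((Real.sqrt 2 / 4) * x) - Real.exp (-(Real.sqrt 2 / 4) * x))^2 /
        (8 * (Real.exp ((Real.sqrt 2 / 4) * x) + Real.exp (-(Real.sqrt 2 / 4) * x))^4)) x := by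
  rw [funext fun y => (hasDerivAt_v₁ y t).deriv]
  have hk : (Real.sqrt 2 / 4) ^ 2 = 1 / 8 := by
    rw [div_pow, Real.sq_sqrt (by norm_num)]
    norm_num
  generalize Real.sqrt 2 / 4 = k at *
  have hS : Real.exp (k * x) + Real.exp (-k * x) ≠ 0 := by positivity
  have hE := hasDerivAt_exp_lin k x
  have hF := hasDerivAt_exp_lin (-k) x
  have h := ((hE.fun_sub hF).const_mul (k * t)).fun_div
    ((hE.fun_add hF).fun_pow 3) (pow_ne_zero 3 hS)
  refine h.congr_deriv ?_
  generalize Real.exp (k * x) = E at *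
  generalize Real.exp (-k * x) = F at *
  -- Factor out `k ^ 2`, the only way `k` enters the second derivative.
  trans k ^ 2 * (t / (E + F) ^ 2 - 3 * t * (E - F) ^ 2 / (E + F) ^ 4)
  · field_simp
    ring
  · rw [hk]
    field_simp

theorem hpm_caseI_order2 :
    (∀ x : ℝ, v₂ x 0 = 0) ∧
    (∀ x t : ℝ,
      deriv (fun s => v₂ x s) t =
        deriv (deriv (fun y => v₁ y t)) x +
          4 * v₀ x * v₁ x t - v₁ x t - 3 * v₁ x t * (v₀ x)^2) := by
  refine ⟨fun x => by simp [v₂], fun x t => ?_⟩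
  have h2 : HasDerivAt (fun s => v₂ x s)
      (-(1/8) * (Real.exp ((Real.sqrt 2 / 4) * x) - Real.exp (-(Real.sqrt 2 / 4) * x)) * (2 * t) /
        (Real.exp ((Real.sqrt 2 / 4) * x) + Real.exp (-(Real.sqrt 2 / 4) * x))^3) t := by
    unfold v₂
    refine (((hasDerivAt_pow 2 t).const_mul _).div_const _).congr_deriv ?_
    norm_num
  rw [h2.deriv, (hasDerivAt_deriv_v₁ x t).deriv]
  unfold v₀ v₁
  have hS : Real.exp (Real.sqrt 2 / 4 * x) + Real.exp (-(Real.sqrt 2 / 4) * x) ≠ 0 := by positivity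
  generalize Real.exp (Real.sqrt 2 / 4 * x) = E at *
  generalize Real.exp (-(Real.sqrt 2 / 4) * x) = F at *
  field_simp
  ring
end

section
/- Fix x : ℝ and set D = exp((√2/4)·x) + exp(−(√2/4)·x). Let g : ℝ → ℝ be g(t) = 1/2 + (1/2)·tanh((1/(2·√2))·(x − t/√2)). Then g(0) = exp((√2/4)·x)/D, the first derivative of g at 0 equals −1/(2·D²), the second derivative of g at 0 equals −(1/4)·(exp((√2/4)·x) − exp(−(√2/4)·x))/D³, and the third derivative of g at 0 equals −(1/8)·(exp((√2/4)·x)² − 4 + exp(−(√2/4)·x)²)/D⁴. -/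
/-!
The function `g` is a logistic profile: writing `a = exp (√2/4 * x)`, `b = exp (-√2/4 * x)`, one has
`g 0 = a / (a + b)`, and `g` satisfies the Riccati equation `g' = -g (1 - g) / 2` because
`tanh' = 1 - tanh²`. Differentiating the equation expresses `g''` and `g'''` as polynomials in `g`:
`g'' = g (1 - g) (1 - 2 g) / 4` and `g''' = -g (1 - g) (1 - 6 g + 6 g²) / 8`. The claimed values
follow by substituting `g 0 = a / (a + b)` and using `a * b = 1`.
-/

theorem hasDerivAt_tanh_aux (u : ℝ) : HasDerivAt Real.tanh (1 - Real.tanh u ^ 2) u := by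
  have hc : Real.cosh u ≠ 0 := (Real.cosh_pos u).ne'
  have h := (Real.hasDerivAt_sinh u).div (Real.hasDerivAt_cosh u) hc
  have he : Real.tanh = Real.sinh / Real.cosh := by
    funext v
    simp [Real.tanh_eq_sinh_div_cosh]
  rw [he]
  refine h.congr_deriv ?_
  simp only [Pi.div_apply]
  field_simp

/-- Repeated differentiation of the Riccati equation `g' = -g (1 - g) / 2`. -/
theorem riccati_derivs {g : ℝ → ℝ} (hg : ∀ t, HasDerivAt g (-(1/2) * (g t * (1 - g t))) t) :
    deriv g = (fun t => -(1/2) * (g t * (1 - g t))) ∧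
    iteratedDeriv 2 g = (fun t => (1/4) * (g t * (1 - g t) * (1 - 2 * g t))) ∧
    iteratedDeriv 3 g =
      (fun t => -(1/8) * (g t * (1 - g t) * (1 - 6 * g t + 6 * g t ^ 2))) := by
  have h1 : deriv g = (fun t => -(1/2) * (g t * (1 - g t))) := funext fun t => (hg t).deriv
  have h2 : iteratedDeriv 2 g = (fun t => (1/4) * (g t * (1 - g t) * (1 - 2 * g t))) := by
    rw [iteratedDeriv_succ, iteratedDeriv_one, h1]
    funext t
    refine ((((hg t).mul ((hg t).const_sub 1)).const_mul (-(1/2))).congr_deriv ?_).deriv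
    ring
  refine ⟨h1, h2, ?_⟩
  rw [iteratedDeriv_succ, h2]
  funext t
  refine (((((hg t).mul ((hg t).const_sub 1)).mul
    (((hg t).const_mul 2).const_sub 1)).const_mul (1/4)).congr_deriv ?_).deriv
  simp only [Pi.mul_apply]
  ring

theorem taylor_coeffs_caseI (x : ℝ) :
    let D := Real.exp ((Real.sqrt 2 / 4) * x) + Real.exp (-(Real.sqrt 2 / 4) * x)
    let g : ℝ → ℝ := fun t =>
      1/2 + (1/2) * Real.tanh ((1/(2 * Real.sqrt 2)) * (x - t / Real.sqrt 2))
    g 0 = Real.exp ((Real.sqrt 2 / 4) * x) / D ∧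
    deriv g 0 = -1 / (2 * D^2) ∧
    iteratedDeriv 2 g 0 =
      -(1/4) * (Real.exp ((Real.sqrt 2 / 4) * x) - Real.exp (-(Real.sqrt 2 / 4) * x)) / D^3 ∧
    iteratedDeriv 3 g 0 =
      -(1/8) * ((Real.exp ((Real.sqrt 2 / 4) * x))^2 - 4 + (Real.exp (-(Real.sqrt 2 / 4) * x))^2) / D^4 := by
  intro D g
  have hs : Real.sqrt 2 * Real.sqrt 2 = 2 := Real.mul_self_sqrt (by norm_num)
  have hs0 : Real.sqrt 2 ≠ 0 := by positivity
  have hode : ∀ t, HasDerivAt g (-(1/2) * (g t * (1 - g t))) t := by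
    intro t
    have hin : HasDerivAt (fun t : ℝ => (1/(2 * Real.sqrt 2)) * (x - t / Real.sqrt 2))
        (-(1/4)) t := by
      refine ((((hasDerivAt_id t).div_const (Real.sqrt 2)).const_sub x).const_mul
        (1/(2 * Real.sqrt 2))).congr_deriv ?_
      field_simp
      linarith
    refine ((((hasDerivAt_tanh_aux _).comp t hin).const_mul (1/2)).const_add
      (1/2)).congr_deriv ?_
    simp only [g]
    ring
  have hab : Real.exp ((Real.sqrt 2 / 4) * x) * Real.exp (-(Real.sqrt 2 / 4) * x) = 1 := by
    rw [← Real.exp_add, ← Real.exp_zero]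
    congr 1
    ring
  have hD : D ≠ 0 := by positivity
  have hg0 : g 0 = Real.exp ((Real.sqrt 2 / 4) * x) / D := by
    have harg : (1/(2 * Real.sqrt 2)) * (x - 0 / Real.sqrt 2) = (Real.sqrt 2 / 4) * x := by
      field_simp
      linear_combination (-2 * x * Real.sqrt 2) * hs
    simp only [g]
    rw [harg, Real.tanh_eq, ← neg_mul]
    change 1/2 + 1/2 * (_ / D) = _
    field_simp
    simp only [D]
    ring_nf
  obtain ⟨h1, h2, h3⟩ := riccati_derivs hode
  have hg1 : 1 - g 0 = Real.exp (-(Real.sqrt 2 / 4) * x) / D := by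
    rw [hg0]
    field_simp
    simp only [D]
    ring_nf
  have hprod : g 0 * (1 - g 0) = 1 / D ^ 2 := by
    rw [hg1, hg0, div_mul_div_comm, hab, sq]
  refine ⟨hg0, ?_, ?_, ?_⟩
  · rw [h1]
    simp only [hprod]
    field_simp
  · rw [h2]
    have h : 1 - 2 * g 0 = (1 - g 0) - g 0 := by ring
    simp only [hprod]
    rw [h, hg1, hg0]
    field_simp
    ring
  · rw [h3]
    have h : 1 - 6 * g 0 + 6 * g 0 ^ 2 = 1 - 6 * (g 0 * (1 - g 0)) := by ring
    have hsq : (Real.exp ((Real.sqrt 2 / 4) * x))^2 - 4 + (Real.exp (-(Real.sqrt 2 / 4) * x))^2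
        = D ^ 2 - 6 := by
      simp only [D]
      linear_combination (-2) * hab
    rw [hsq]
    simp only [h, hprod]
    field_simp
end

section
/- Fix x : ℝ and set D = exp(x/4) + exp(−x/4). Let g : ℝ → ℝ be g(t) = 1/2 − (1/2)·tanh((1/4)·(x + (3/2)·t)). Then g(0) = exp(−x/4)/D, the first derivative of g at 0 equals −(3/4)/D², the second derivative of g at 0 equals (9/16)·(exp(x/4) − exp(−x/4))/D³, and the third derivative of g at 0 equals −(27/64)·(exp(x/4)² + exp(−x/4)² − 4)/D⁴. -/
/-!
The travelling wave `g` is a logistic function: with `u = (x + 3t/2)/4` it equals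
`exp (-u) / (exp u + exp (-u))`, and hence solves the autonomous equation
`g' = -(3/4) g (1 - g)`. Differentiating this equation expresses every higher derivative of `g` as
a polynomial in `g`, so the claim reduces to algebra in `exp (x/4)` and `exp (-x/4)`, whose
product is `1`.
-/

/-- The logistic equation `g' = -(3/4) g (1 - g)` satisfied by the travelling wave. -/
lemma hasDerivAt_wave (x t : ℝ) :
    HasDerivAt (fun t : ℝ => 1/2 - (1/2) * Real.tanh ((1/4) * (x + (3/2) * t)))
      (-(3/4) * ((1/2 - (1/2) * Real.tanh ((1/4) * (x + (3/2) * t))) *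
        (1 - (1/2 - (1/2) * Real.tanh ((1/4) * (x + (3/2) * t)))))) t := by
  have hu : HasDerivAt (fun t : ℝ => (1/4) * (x + (3/2) * t)) ((1/4) * ((3/2) * 1)) t :=
    (((hasDerivAt_id t).const_mul (3/2 : ℝ)).const_add x).const_mul (1/4 : ℝ)
  have hc := (Real.cosh_pos ((1/4) * (x + (3/2) * t))).ne'
  have h := ((hu.sinh.div hu.cosh hc).const_mul (1/2 : ℝ)).const_sub (1/2 : ℝ)
  simp only [Real.tanh_eq_sinh_div_cosh]
  refine h.congr_deriv ?_
  field_simp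
  ring

theorem taylor_coeffs_caseII (x : ℝ) :
    let D := Real.exp (x/4) + Real.exp (-x/4)
    let g : ℝ → ℝ := fun t => 1/2 - (1/2) * Real.tanh ((1/4) * (x + (3/2) * t))
    g 0 = Real.exp (-x/4) / D ∧
    deriv g 0 = -(3/4) / D^2 ∧
    iteratedDeriv 2 g 0 = (9/16) * (Real.exp (x/4) - Real.exp (-x/4)) / D^3 ∧
    iteratedDeriv 3 g 0 =
      -(27/64) * ((Real.exp (x/4))^2 + (Real.exp (-x/4))^2 - 4) / D^4 := by
  intro D g
  have hg : ∀ t, HasDerivAt g (-(3/4) * (g t * (1 - g t))) t := hasDerivAt_wave x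
  have d1 : deriv g = fun t => -(3/4) * (g t * (1 - g t)) := funext fun t => (hg t).deriv
  have d2 : iteratedDeriv 2 g = fun t => (9/16) * (g t * (1 - g t) * (1 - 2 * g t)) := by
    rw [iteratedDeriv_succ, iteratedDeriv_one, d1]
    funext t
    refine ((((hg t).mul ((hg t).const_sub 1)).const_mul (-(3/4) : ℝ)).congr_deriv ?_).deriv
    ring
  have d3 : iteratedDeriv 3 g =
      fun t => -(27/64) * (g t * (1 - g t) * (1 - 6 * g t + 6 * g t ^ 2)) := by
    rw [iteratedDeriv_succ, d2]
    funext t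
    refine (((((hg t).mul ((hg t).const_sub 1)).mul
      (((hg t).const_mul 2).const_sub 1)).const_mul (9/16 : ℝ)).congr_deriv ?_).deriv
    simp only [Pi.mul_apply]
    ring
  have hD : D ≠ 0 := by positivity
  have hab : Real.exp (x/4) * Real.exp (-x/4) = 1 := by
    rw [← Real.exp_add, ← Real.exp_zero]
    ring_nf
  have h0 : g 0 = Real.exp (-x/4) / D := by
    have e1 : (1/4) * (x + (3/2) * 0) = x/4 := by ring
    have e2 : -(x/4) = -x/4 := by ring
    simp only [g, D] at hD ⊢
    rw [e1, Real.tanh_eq, e2]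
    field_simp
    ring
  have h1 : 1 - g 0 = Real.exp (x/4) / D := by
    rw [h0, eq_div_iff hD, sub_mul, div_mul_cancel₀ _ hD]
    simp only [D]
    ring
  have hp : g 0 * (1 - g 0) = 1 / D^2 := by
    rw [h1, h0, div_mul_div_comm, mul_comm, mul_comm (Real.exp _), ← hab]
    ring
  have hs : 1 - 2 * g 0 = (Real.exp (x/4) - Real.exp (-x/4)) / D := by
    rw [sub_div, ← h0, ← h1]
    ring
  have hq : 1 - 6 * g 0 + 6 * g 0 ^ 2 =
      ((Real.exp (x/4))^2 + (Real.exp (-x/4))^2 - 4) / D^2 := by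
    have : 1 - 6 * g 0 + 6 * g 0 ^ 2 = (1 - g 0)^2 + (g 0)^2 - 4 * (g 0 * (1 - g 0)) := by ring
    rw [this, hp, h1, h0]
    ring_nf
  refine ⟨h0, ?_, ?_, ?_⟩
  · rw [d1]
    simp only [hp]
    ring
  · rw [d2]
    simp only [hp, hs]
    ring_nf
  · rw [d3]
    simp only [hp, hq]
    ring_nf
end

section
/- Let α, β, γ : ℝ with α² + 8·β ≥ 0, and set ρ = √(α² + 8·β). Then the function v : ℝ × ℝ → ℝ defined by v(x,t) = γ/2 − (γ/2)·tanh((γ·(ρ + α)/8)·(x − (((α + ρ)·γ + 2·(α − ρ))/4)·t)) satisfies, for all real x and t, the Burgers–Huxley equation ∂v/∂t(x,t) = ∂²v/∂x²(x,t) − α·v(x,t)·∂v/∂x(x,t) + β·v(x,t)·(1 − v(x,t))·(v(x,t) − γ). -/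
/-! The profile `T = tanh` solves `T' = 1 - T²`, so every derivative of the wave
`v = (γ/2)(1 - T)` is a polynomial in `T`. With wave number `k = γ(ρ + α)/8` and speed `c`,
both sides of the equation are multiples of `1 - T²` (note `v(v - γ) = -(γ²/4)(1 - T²)`),
and the remaining identity, affine in `T`, follows from `ρ² = α² + 8β`. -/

lemma hasDerivAt_real_tanh (z : ℝ) : HasDerivAt Real.tanh (1 - Real.tanh z ^ 2) z := by
  have hc : Real.cosh z ≠ 0 := (Real.cosh_pos z).ne'
  have hd := (Real.hasDerivAt_sinh z).div (Real.hasDerivAt_cosh z) hc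
  have he : Real.tanh = Real.sinh / Real.cosh := by
    funext y
    exact Real.tanh_eq_sinh_div_cosh y
  rw [← he] at hd
  refine hd.congr_deriv ?_
  rw [Real.tanh_eq_sinh_div_cosh]
  field_simp

theorem deng_travelling_wave_lower (α β γ : ℝ) (h : α^2 + 8*β ≥ 0) :
    let ρ := Real.sqrt (α^2 + 8*β)
    let v : ℝ × ℝ → ℝ := fun p =>
      γ/2 - (γ/2) * Real.tanh ((γ * (ρ + α)/8) *
        (p.1 - (((α + ρ) * γ + 2 * (α - ρ))/4) * p.2))
    ∀ x t : ℝ,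
      deriv (fun s => v (x, s)) t =
        deriv (deriv (fun y => v (y, t))) x -
          α * v (x, t) * deriv (fun y => v (y, t)) x +
          β * v (x, t) * (1 - v (x, t)) * (v (x, t) - γ) := by
  intro ρ v x t
  have hρ : ρ ^ 2 = α ^ 2 + 8 * β := Real.sq_sqrt h
  have hβ : β = (ρ ^ 2 - α ^ 2) / 8 := by linarith
  clear_value ρ
  set k := γ * (ρ + α) / 8 with hk
  set c := ((α + ρ) * γ + 2 * (α - ρ)) / 4 with hc
  have hTx : ∀ y, HasDerivAt (fun y => Real.tanh (k * (y - c * t)))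
      ((1 - Real.tanh (k * (y - c * t)) ^ 2) * (k * 1)) y := fun y =>
    (hasDerivAt_real_tanh _).comp y (((hasDerivAt_id y).sub_const _).const_mul k)
  have hTt : HasDerivAt (fun s => Real.tanh (k * (x - c * s)))
      ((1 - Real.tanh (k * (x - c * t)) ^ 2) * (k * -(c * 1))) t :=
    (hasDerivAt_real_tanh _).comp t ((((hasDerivAt_id t).const_mul c).const_sub x).const_mul k)
  have hvt : deriv (fun s => v (x, s)) t = _ := ((hTt.const_mul (γ / 2)).const_sub (γ / 2)).deriv
  have hvx : deriv (fun y => v (y, t)) = fun y =>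
      -(γ / 2 * ((1 - Real.tanh (k * (y - c * t)) ^ 2) * (k * 1))) :=
    funext fun y => (((hTx y).const_mul (γ / 2)).const_sub (γ / 2)).deriv
  have hvxx := ((((((hTx x).pow 2).const_sub 1).mul_const (k * 1)).const_mul (γ / 2)).neg).deriv
  have hv : v (x, t) = γ / 2 - γ / 2 * Real.tanh (k * (x - c * t)) := rfl
  rw [hvt, hvx, hv]
  refine Eq.trans ?_ (congrArg (fun d => d - _ + _) hvxx.symm)
  beta_reduce
  generalize Real.tanh (k * (x - c * t)) = T
  rw [hβ, hk, hc]
  push_cast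
  ring
end
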